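/- Let E ⊆ 𝕋 be a closed set of Lebesgue (arc-length) measure zero. Then there exists a cyclic function f ∈ H² with universal optimal polynomial approximants on E; that is, f ∈ U_E and the set { pf : p a polynomial } is dense in H². -/

import Mathlib

/-!
The proof is a Baire category argument in the closure `X`, in `H²`, of the set `recipSet` of
functions `1 / P` with `P` a polynomial without zeros on the closed unit disc.

If `P f₀ = 1` then `Q_n(1/f₀) = P` for all `n ≥ deg P`, and `Q_n(1/f)` is uniformly close to `P`
on the closed disc for `f` near `f₀` (`opa_near`). Hence the set of `f` for which some
`Q_n(1/f)` with `n ≥ j` is close to `g` on `E` has an interior which is dense in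
`X` as soon as every `1 / P₀` can be approximated in `H²` by functions `1 / P` with `P` close to
`g` on `E` (`exists_recip_near`).
Taking a countable dense set of `g` in `C(E)`, and adding the open conditions that some
polynomial multiple of `f` be close to `1`, which hold on all of `recipSet`, gives a single `f`.

For the approximation step:
* `E` being null and compact, it is covered by finitely many arcs of equal radius and small total
  length (`exists_cover`). Summing half-plane kernels at their centres gives `F` with `Re F ≥ 0`
  on the disc, `Re F` large on `E` and `F(0)` small (`exists_large_re`).
  With `T` a polynomial approximant of `exp(-F)`, of modulus essentially at most `1`, one has
  `‖1 - T‖² = 1 - 2 Re T(0) + ‖T‖²`, which is small as `T(0)` is close to `1` and, by Parseval,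
  `‖T‖` is at most about `1`. So `k = 1 - T` is a bounded polynomial close to `1` on `E` and
  small in `H²` (`exists_peak`).
* Polynomials are dense in `C(E)` (`exists_poly_near`) by Stone–Weierstrass, because on the circle
  `conj z = 1 / z`, which on `E` is nearly `(k z - k 0) / z`.
* Every `g` in `C(E)` is nearly `P₀ exp v` on `E` for a polynomial `v` (`exists_exp_near`): a
  polynomial maps `E` to a set with null imaginary part, so after a small translation it takes
  values in the slit plane on `E` and has a logarithm there.
* Then `P ≈ P₀ exp (v k)` is close to `g` on `E`, has no zeros on the closed disc, and
  `1 / P - 1 / P₀ = (exp (-v k) - 1) / P₀` is small in `H²` because `k` is.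

`H²` norms of polynomials are handled through the shift operator `S`: multiplication by `q` is
`q(S)`, and `P(S)` is invertible for zero-free `P` by the spectral mapping theorem, the spectrum of
`S` being contained in the closed disc.
-/

open MeasureTheory Filter Metric Polynomial

noncomputable section

/-- The Hardy space `H²`, modelled as the space `ℓ²(ℕ, ℂ)` of square-summable
Taylor-coefficient sequences: `f : H2` represents the holomorphic function
`z ↦ ∑ₖ f k * z ^ k` on the unit disc, and the `lp`-norm of `f` is its `H²` norm. -/
abbrev H2 := lp (fun _ : ℕ => ℂ) 2

/-- Value at `z` of the holomorphic function with Taylor coefficients `f`. -/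
def h2Val (f : H2) (z : ℂ) : ℂ := ∑' k, f k * z ^ k

/-- `n`-th Taylor coefficient of the product of a polynomial `q` with the power series
having coefficients `a`. -/
def coeffMul (q : Polynomial ℂ) (a : ℕ → ℂ) (n : ℕ) : ℂ :=
  ∑ j ∈ Finset.range (n + 1), q.coeff j * a (n - j)

/-- Taylor coefficients of `q·f − 1`. -/
def errSeq (q : Polynomial ℂ) (f : H2) (n : ℕ) : ℂ :=
  coeffMul q (fun k => f k) n - if n = 0 then 1 else 0

/-- The `H²` norm `‖q·f − 1‖_{H²}`. -/
def h2ErrNorm (q : Polynomial ℂ) (f : H2) : ℝ :=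
  Real.sqrt (∑' n, ‖errSeq q f n‖ ^ 2)

/-- `Q` is an optimal polynomial approximant of order `n` of `1/f`: it has degree at
most `n` and minimizes `‖q·f − 1‖_{H²}` over all polynomials `q` of degree at most `n`. -/
def IsOpa (n : ℕ) (f : H2) (Q : Polynomial ℂ) : Prop :=
  Q.degree ≤ (n : WithBot ℕ) ∧
    ∀ q : Polynomial ℂ, q.degree ≤ (n : WithBot ℕ) → h2ErrNorm Q f ≤ h2ErrNorm q f

open Classical in
/-- The optimal polynomial approximant `Q_n(1/f)` (well defined whenever the minimizer
exists and is unique, which is the case for every `f ≠ 0`). -/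
def opa (n : ℕ) (f : H2) : Polynomial ℂ :=
  if h : ∃! Q : Polynomial ℂ, IsOpa n f Q then h.choose else 0

/-- Sup-distance of two functions over a set `E` (the distance in `C(E)`). -/
def supDist (E : Set ℂ) (u v : ℂ → ℂ) : ℝ := ⨆ z : E, ‖u z - v z‖

/-- `f` has universal optimal polynomial approximants on `E`: every continuous function
on `E` is the uniform limit on `E` of a subsequence of the sequence `Q_n(1/f)`. -/
def HasUniversalOpa (E : Set ℂ) (f : H2) : Prop :=
  ∀ g : ℂ → ℂ, ContinuousOn g E →
    ∃ m : ℕ → ℕ, StrictMono m ∧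
      TendstoUniformlyOn (fun s z => (opa (m s) f).eval z) g atTop E

/-- `E ⊆ 𝕋` has arc-length (Lebesgue) measure zero. -/
def circleNull (E : Set ℂ) : Prop :=
  volume {θ : ℝ | Complex.exp (θ * Complex.I) ∈ E} = 0

/-! ### The shift and its polynomial calculus -/

lemma two_toReal_pos : (0 : ℝ) < (2 : ENNReal).toReal := by norm_num

lemma h2_summable (f : H2) : Summable fun k => ‖f k‖ ^ 2 := by
  have := (lp.memℓp f).summable two_toReal_pos
  simpa using this

lemma h2_norm_sq (f : H2) : ‖f‖ ^ 2 = ∑' k, ‖f k‖ ^ 2 := by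
  have := lp.norm_rpow_eq_tsum two_toReal_pos f
  simpa using this

lemma h2_norm_eq (f : H2) : ‖f‖ = Real.sqrt (∑' k, ‖f k‖ ^ 2) := by
  rw [← h2_norm_sq, Real.sqrt_sq (norm_nonneg _)]

/-- The coefficient sequence `0, a₀, a₁, …` of `z · f`. -/
def shiftSeq (a : ℕ → ℂ) : ℕ → ℂ
  | 0 => 0
  | n + 1 => a n

lemma shiftSeq_hasSum (f : H2) : HasSum (fun k => ‖shiftSeq f k‖ ^ 2) (‖f‖ ^ 2) := by
  rw [← hasSum_nat_add_iff' 1]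
  simpa [shiftSeq, h2_norm_sq f] using (h2_summable f).hasSum

lemma shiftSeq_mem (f : H2) : Memℓp (shiftSeq f) 2 := by
  rw [memℓp_gen_iff two_toReal_pos]
  simpa using (shiftSeq_hasSum f).summable

/-- The shift `f ↦ z · f` as a bounded operator on `H²`. -/
def shiftOp : H2 →L[ℂ] H2 :=
  LinearMap.mkContinuous
    { toFun := fun f => ⟨shiftSeq f, shiftSeq_mem f⟩
      map_add' := fun f g => by
        ext n
        cases n with
        | zero => exact (add_zero (0 : ℂ)).symm
        | succ n => rfl
      map_smul' := fun c f => by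
        ext n
        cases n <;> simp [shiftSeq] } 1 (fun f => by
    rw [one_mul]
    refine le_of_eq ?_
    rw [← sq_eq_sq₀ (norm_nonneg _) (norm_nonneg _), h2_norm_sq]
    exact (shiftSeq_hasSum f).tsum_eq)

lemma shiftOp_apply (f : H2) (n : ℕ) : shiftOp f n = shiftSeq f n := rfl

lemma shiftOp_norm_le : ‖shiftOp‖ ≤ 1 := LinearMap.mkContinuous_norm_le _ zero_le_one _

/-- Multiplication by the polynomial `q` on `H²`. -/
def mulOp (q : ℂ[X]) : H2 →L[ℂ] H2 := aeval shiftOp q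

lemma mulOp_mul (p q : ℂ[X]) : mulOp (p * q) = mulOp p * mulOp q := by simp [mulOp]
lemma mulOp_add (p q : ℂ[X]) : mulOp (p + q) = mulOp p + mulOp q := by simp [mulOp]
lemma mulOp_sub (p q : ℂ[X]) : mulOp (p - q) = mulOp p - mulOp q := by simp [mulOp]
lemma mulOp_one : mulOp 1 = 1 := by simp [mulOp]

lemma mulOp_mul_apply (p q : ℂ[X]) (f : H2) : mulOp (p * q) f = mulOp p (mulOp q f) := by
  rw [mulOp_mul]; rfl

lemma shiftOp_pow_apply (j : ℕ) (f : H2) (n : ℕ) :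
    (shiftOp ^ j) f n = if j ≤ n then f (n - j) else 0 := by
  induction j generalizing n with
  | zero => simp
  | succ j ih =>
    rw [pow_succ', mul_apply_eq_comp, shiftOp_apply]
    cases n with
    | zero => simp [shiftSeq]
    | succ n => simpa [-FunLike.coe_pow, shiftSeq] using ih n

lemma mulOp_apply (q : ℂ[X]) (f : H2) (n : ℕ) :
    mulOp q f n = coeffMul q (fun k => f k) n := by
  induction q using Polynomial.induction_on' with
  | add p q hp hq =>
    rw [mulOp_add]
    simp only [_root_.add_apply, lp.coeFn_add, Pi.add_apply, hp, hq, coeffMul,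
      coeff_add, add_mul, Finset.sum_add_distrib]
  | monomial j a =>
    have : mulOp (monomial j a) f = a • (shiftOp ^ j) f := by
      simp [mulOp, aeval_monomial, Algebra.algebraMap_eq_smul_one]
    rw [this, lp.coeFn_smul, Pi.smul_apply, shiftOp_pow_apply]
    simp only [coeffMul, coeff_monomial, ite_mul, zero_mul, Finset.sum_ite_eq,
      Finset.mem_range, smul_eq_mul, Nat.lt_succ_iff]
    split_ifs <;> simp

/-- The constant function `1` in `H²`. -/
def e0 : H2 := lp.single 2 0 1

lemma e0_apply (n : ℕ) : e0 n = if n = 0 then 1 else 0 := by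
  simp [e0, Pi.single_apply]

lemma e0_norm : ‖e0‖ = 1 := by
  rw [e0, lp.norm_single (by norm_num)]; simp

lemma h2ErrNorm_eq (q : ℂ[X]) (f : H2) : h2ErrNorm q f = ‖mulOp q f - e0‖ := by
  rw [h2_norm_eq, h2ErrNorm]
  congr 2
  funext n
  simp [errSeq, mulOp_apply, e0_apply]

lemma sqrt_tsum_eq (p : ℂ[X]) (f h : H2) :
    Real.sqrt (∑' k, ‖coeffMul p (fun j => f j) k - h k‖ ^ 2) = ‖mulOp p f - h‖ := by
  rw [h2_norm_eq]
  congr 2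
  funext n
  simp [mulOp_apply]

lemma mulOp_e0_apply (p : ℂ[X]) (n : ℕ) : mulOp p e0 n = p.coeff n := by
  rw [mulOp_apply, coeffMul, Finset.sum_eq_single n]
  · simp [e0_apply]
  · intro j hj hjn
    have : n - j ≠ 0 := by
      have := Finset.mem_range.1 hj
      omega
    simp [e0_apply, this]
  · simp

/-- Parseval: the `H²` norm of a polynomial is its quadratic mean over the circle. -/
lemma mulOp_e0_norm_sq (p : ℂ[X]) :
    ‖mulOp p e0‖ ^ 2 = Real.circleAverage (fun z ↦ ‖p.eval z‖ ^ 2) 0 1 := by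
  rw [← p.sum_sq_norm_coeff_eq_circleAverage, h2_norm_sq]
  simp only [mulOp_e0_apply]
  rw [tsum_eq_sum]
  intro b hb
  simp [notMem_support_iff.1 hb]

/-- Pointwise domination on the circle implies domination of `H²` norms. -/
lemma mulOp_e0_norm_le (p q : ℂ[X]) (c : ℝ) (hc : 0 ≤ c)
    (h : ∀ z : ℂ, ‖z‖ ≤ 1 → ‖p.eval z‖ ≤ c * ‖q.eval z‖) :
    ‖mulOp p e0‖ ≤ c * ‖mulOp q e0‖ := by
  rw [← sq_le_sq₀ (norm_nonneg _) (by positivity), mul_pow, mulOp_e0_norm_sq, mulOp_e0_norm_sq,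
    ← smul_eq_mul, ← Real.circleAverage_fun_smul]
  refine Real.circleAverage_mono ?_ ?_ ?_
  · exact ContinuousOn.circleIntegrable' (by fun_prop)
  · exact ContinuousOn.circleIntegrable' (by fun_prop)
  · intro z hz
    have hz : ‖z‖ ≤ 1 := by simpa using (le_of_eq (mem_sphere_iff_norm.1 hz))
    rw [smul_eq_mul, ← mul_pow]
    exact pow_le_pow_left₀ (norm_nonneg _) (h z hz) 2

lemma coeff_norm_le (p : ℂ[X]) (n : ℕ) : ‖p.coeff n‖ ≤ ‖mulOp p e0‖ := by
  rw [← mulOp_e0_apply]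
  exact lp.norm_apply_le_norm (by norm_num) _ _

lemma mulOp_norm_le (p : ℂ[X]) (n : ℕ) (hp : p.degree ≤ (n : WithBot ℕ)) :
    ‖mulOp p‖ ≤ (n + 1) * ‖mulOp p e0‖ := by
  have hn : p.natDegree < n + 1 := Nat.lt_succ_of_le (natDegree_le_of_degree_le hp)
  rw [show ‖mulOp p‖ = ‖∑ i ∈ Finset.range (n + 1), p.coeff i • shiftOp ^ i‖ from
    congrArg norm (aeval_eq_sum_range' hn _)]
  refine (norm_sum_le _ _).trans ?_
  refine (Finset.sum_le_card_nsmul _ _ ‖mulOp p e0‖ fun i _ => ?_).trans (by simp)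
  rw [norm_smul]
  calc _ ≤ ‖p.coeff i‖ * 1 := by
        gcongr
        rcases Nat.eq_zero_or_pos i with rfl | hi
        · rw [pow_zero]
          exact ContinuousLinearMap.norm_id_le
        · exact (norm_pow_le' _ hi).trans (pow_le_one₀ (norm_nonneg _) shiftOp_norm_le)
    _ ≤ _ := by rw [mul_one]; exact coeff_norm_le p i

lemma eval_norm_le (p : ℂ[X]) (n : ℕ) (hp : p.degree ≤ (n : WithBot ℕ)) (z : ℂ) (hz : ‖z‖ ≤ 1) :
    ‖p.eval z‖ ≤ (n + 1) * ‖mulOp p e0‖ := by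
  have hn : p.natDegree < n + 1 := Nat.lt_succ_of_le (natDegree_le_of_degree_le hp)
  rw [eval_eq_sum_range' hn]
  refine (norm_sum_le _ _).trans ?_
  refine (Finset.sum_le_card_nsmul _ _ ‖mulOp p e0‖ fun i _ => ?_).trans (by simp)
  rw [norm_mul, norm_pow]
  calc _ ≤ ‖p.coeff i‖ * 1 := by
        gcongr
        exact pow_le_one₀ (norm_nonneg _) hz
    _ ≤ _ := by rw [mul_one]; exact coeff_norm_le p i

lemma mulOp_isUnit (p : ℂ[X]) (hp : ∀ z : ℂ, ‖z‖ ≤ 1 → p.eval z ≠ 0) : IsUnit (mulOp p) := by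
  have : Nontrivial H2 := ⟨e0, 0, fun h => by simpa [h] using e0_norm⟩
  rw [← spectrum.zero_notMem_iff ℂ, mulOp, spectrum.map_polynomial_aeval]
  rintro ⟨z, hz, hz0⟩
  refine hp z ?_ hz0
  exact (spectrum.norm_le_norm_of_mem hz).trans shiftOp_norm_le

/-! ### Optimal polynomial approximants -/

lemma existsUnique_isOpa (n : ℕ) (f : H2)
    (hf : ∀ q : ℂ[X], q.degree ≤ (n : WithBot ℕ) → mulOp q f = 0 → q = 0) :
    ∃! Q : ℂ[X], IsOpa n f Q := by
  let L : ℂ[X] →ₗ[ℂ] H2 :=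
    { toFun := fun q => mulOp q f
      map_add' := fun p q => by rw [mulOp_add]; rfl
      map_smul' := fun c q => by simp [mulOp] }
  let V : Submodule ℂ H2 := (degreeLE ℂ n).map L
  have : FiniteDimensional ℂ (degreeLE ℂ n) := by
    have : (degreeLE ℂ (n : WithBot ℕ)) = degreeLT ℂ (n + 1) := by
      ext p
      rw [mem_degreeLE, mem_degreeLT]
      exact (Order.lt_succ_iff (a := p.degree) (b := (n : WithBot ℕ))).symm
    rw [this]
    infer_instance
  have hV : FiniteDimensional ℂ V := inferInstance
  obtain ⟨Q, hQ, hQV⟩ : V.starProjection e0 ∈ V := V.starProjection_apply_mem e0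
  have hQd : Q.degree ≤ (n : WithBot ℕ) := mem_degreeLE.1 hQ
  have pyth : ∀ q : ℂ[X], q.degree ≤ (n : WithBot ℕ) →
      h2ErrNorm q f ^ 2 = ‖mulOp (q - Q) f‖ ^ 2 + h2ErrNorm Q f ^ 2 := by
    intro q hq
    have h1 : mulOp (q - Q) f ∈ V := ⟨q - Q, mem_degreeLE.2
      ((degree_sub_le _ _).trans (max_le hq hQd)), rfl⟩
    have h2 : inner ℂ (mulOp (q - Q) f) (mulOp Q f - e0) = 0 := by
      have h3 : mulOp Q f = V.starProjection e0 := hQV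
      have := V.sub_starProjection_mem_orthogonal e0 _ h1
      rw [h3, ← neg_sub e0, inner_neg_right, this, neg_zero]
    rw [h2ErrNorm_eq, h2ErrNorm_eq, pow_two, pow_two, pow_two,
      ← norm_add_sq_eq_norm_sq_add_norm_sq_of_inner_eq_zero _ _ h2, mulOp_sub]
    simp
  refine ⟨Q, ⟨hQd, fun q hq => ?_⟩, fun q hq => ?_⟩
  · have := pyth q hq
    refine le_of_sq_le_sq ?_ (Real.sqrt_nonneg _)
    nlinarith [sq_nonneg ‖mulOp (q - Q) f‖]
  · have h1 := pyth q hq.1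
    have h2 := hq.2 Q hQd
    have h3 : h2ErrNorm q f ^ 2 ≤ h2ErrNorm Q f ^ 2 :=
      pow_le_pow_left₀ (Real.sqrt_nonneg _) h2 2
    have h4 : ‖mulOp (q - Q) f‖ ^ 2 ≤ 0 := by linarith
    have h5 : mulOp (q - Q) f = 0 := by
      simpa using le_antisymm h4 (sq_nonneg _)
    exact sub_eq_zero.1 (hf _ ((degree_sub_le _ _).trans (max_le hq.1 hQd)) h5)

/-- If `P f₀ = 1`, then `Q_n(1/f)` is close to `P` on the closed disc for all `f` near `f₀`. -/
lemma opa_near (n : ℕ) (P : ℂ[X]) (hP : P.degree ≤ (n : WithBot ℕ)) (f₀ : H2)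
    (hf₀ : mulOp P f₀ = e0) (ε : ℝ) (hε : 0 < ε) :
    ∀ᶠ f in nhds f₀, ∀ z : ℂ, ‖z‖ ≤ 1 → ‖(opa n f).eval z - P.eval z‖ < ε := by
  set C : ℝ := ‖mulOp P‖ + 1 with hC
  have hC0 : 0 < C := by positivity
  set N : ℝ := (n : ℝ) + 1 with hN
  have hN0 : 0 < N := by positivity
  set δ : ℝ := min (1 / (2 * C * N)) (ε / (8 * C ^ 2 * N)) with hδ
  have hδ0 : 0 < δ := by positivity
  filter_upwards [Metric.ball_mem_nhds f₀ hδ0] with f hf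
  rw [mem_ball_iff_norm] at hf
  -- on polynomials of degree at most `n`, multiplication by `f` is bounded below
  have lower : ∀ q : ℂ[X], q.degree ≤ (n : WithBot ℕ) →
      ‖mulOp q e0‖ ≤ 2 * C * ‖mulOp q f‖ := by
    intro q hq
    have h1 : ‖mulOp q e0‖ ≤ C * ‖mulOp q f₀‖ := by
      rw [← hf₀, ← mulOp_mul_apply, mul_comm, mulOp_mul_apply]
      refine (ContinuousLinearMap.le_opNorm _ _).trans ?_
      gcongr
      linarith
    have h2 : ‖mulOp q f₀‖ ≤ ‖mulOp q f‖ + N * ‖mulOp q e0‖ * δ := by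
      have : mulOp q f₀ = mulOp q f - mulOp q (f - f₀) := by simp
      rw [this]
      refine (norm_sub_le _ _).trans ?_
      gcongr
      refine (ContinuousLinearMap.le_opNorm _ _).trans ?_
      gcongr
      exact mulOp_norm_le q n hq
    have h3 : C * (N * ‖mulOp q e0‖ * δ) ≤ ‖mulOp q e0‖ / 2 := by
      calc C * (N * ‖mulOp q e0‖ * δ) ≤ C * (N * ‖mulOp q e0‖ * (1 / (2 * C * N))) := by
            gcongr
            exact min_le_left _ _
        _ = _ := by field_simp
    nlinarith
  have hex := existsUnique_isOpa n f fun q hq hq0 => by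
    have := lower q hq
    rw [hq0] at this
    simp only [norm_zero, mul_zero, norm_le_zero_iff] at this
    ext k
    rw [← mulOp_e0_apply, this]
    simp
  have hQ : IsOpa n f (opa n f) := by
    rw [opa, dif_pos hex]
    exact hex.choose_spec.1
  intro z hz
  have hd : (opa n f - P).degree ≤ (n : WithBot ℕ) :=
    (degree_sub_le _ _).trans (max_le hQ.1 hP)
  have h1 : ‖mulOp P f - e0‖ ≤ C * δ := by
    rw [← hf₀, ← map_sub]
    refine (ContinuousLinearMap.le_opNorm _ _).trans ?_
    gcongr
    linarith
  have h2 : ‖mulOp (opa n f) f - e0‖ ≤ C * δ := by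
    have := hQ.2 P hP
    rw [h2ErrNorm_eq, h2ErrNorm_eq] at this
    exact this.trans h1
  have h3 : ‖mulOp (opa n f - P) f‖ ≤ 2 * (C * δ) := by
    have : mulOp (opa n f - P) f = (mulOp (opa n f) f - e0) - (mulOp P f - e0) := by
      rw [mulOp_sub]; simp
    rw [this]
    refine (norm_sub_le _ _).trans ?_
    linarith
  rw [← eval_sub]
  calc _ ≤ N * ‖mulOp (opa n f - P) e0‖ := eval_norm_le _ n hd z hz
    _ ≤ N * (2 * C * (2 * (C * δ))) := by
      gcongr
      exact (lower _ hd).trans (by gcongr)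
    _ ≤ N * (2 * C * (2 * (C * (ε / (8 * C ^ 2 * N))))) := by
      gcongr
      exact min_le_right _ _
    _ = ε / 2 := by field_simp; norm_num
    _ < ε := by linarith

/-! ### Truncated exponentials -/

/-- The Taylor polynomial `∑_{m < n} X^m / m!` of the exponential. -/
def expTrunc (n : ℕ) : ℂ[X] := ∑ m ∈ Finset.range n, C ((m.factorial : ℂ)⁻¹) * X ^ m

lemma expTrunc_eval (n : ℕ) (x : ℂ) :
    (expTrunc n).eval x = ∑ m ∈ Finset.range n, x ^ m / m.factorial := by
  simp [expTrunc, eval_finsetSum, div_eq_inv_mul]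

lemma expTrunc_unif (B ε : ℝ) (hε : 0 < ε) :
    ∀ᶠ n in atTop, ∀ x : ℂ, ‖x‖ ≤ B → ‖Complex.exp x - (expTrunc n).eval x‖ < ε := by
  have h1 : Tendsto (fun n : ℕ => |B| ^ n / n.factorial * 2) atTop (nhds (0 * 2)) :=
    (FloorSemiring.tendsto_pow_div_factorial_atTop |B|).mul_const 2
  rw [zero_mul] at h1
  filter_upwards [h1.eventually_lt_const hε, eventually_ge_atTop ⌈2 * |B|⌉₊] with n hn hn2 x hx
  rw [expTrunc_eval]
  have hxB : ‖x‖ ≤ |B| := hx.trans (le_abs_self B)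
  refine (Complex.exp_bound' ?_).trans_lt (lt_of_le_of_lt ?_ hn)
  · rw [div_le_iff₀ (by positivity)]
    have : 2 * |B| ≤ n := (Nat.le_ceil _).trans (by exact_mod_cast hn2)
    push_cast
    linarith
  · gcongr

lemma expTrunc_aeval_tendsto (A : H2 →L[ℂ] H2) :
    Tendsto (fun n => aeval A (expTrunc n)) atTop (nhds (NormedSpace.exp A)) := by
  have := (NormedSpace.exp_series_hasSum_exp' (𝕂 := ℂ) A).tendsto_sum_nat
  refine this.congr fun n => ?_
  simp [expTrunc, Algebra.smul_def]

lemma norm_expTrunc_sub_one_le (n : ℕ) (hn : 1 ≤ n) (x : ℂ) :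
    ‖(expTrunc n).eval x - 1‖ ≤ ‖x‖ * Real.exp ‖x‖ := by
  obtain ⟨n, rfl⟩ := Nat.exists_eq_add_of_le' hn
  rw [expTrunc_eval, Finset.sum_range_succ']
  simp only [pow_zero, Nat.factorial_zero, Nat.cast_one, div_one, add_sub_cancel_right]
  refine (norm_sum_le _ _).trans ?_
  refine le_trans ?_ (mul_le_mul_of_nonneg_left
    (Real.sum_le_exp_of_nonneg (norm_nonneg x) n) (norm_nonneg x))
  rw [Finset.mul_sum]
  refine Finset.sum_le_sum fun m _ => ?_
  rw [norm_div, norm_pow, Complex.norm_natCast, pow_succ', mul_div_assoc]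
  gcongr
  exact Nat.le_succ m

lemma norm_exp_sub_one_le_mul (x : ℂ) : ‖Complex.exp x - 1‖ ≤ ‖x‖ * Real.exp ‖x‖ := by
  refine le_of_forall_pos_le_add fun ε hε => ?_
  obtain ⟨n, hn, hn1⟩ := ((expTrunc_unif ‖x‖ ε hε).and (eventually_ge_atTop 1)).exists
  have h1 := hn x le_rfl
  have h2 := norm_expTrunc_sub_one_le n hn1 x
  have h3 := norm_sub_le_norm_sub_add_norm_sub (Complex.exp x) ((expTrunc n).eval x) 1
  linarith

lemma poly_bound (p : ℂ[X]) : ∃ B : ℝ, 0 < B ∧ ∀ z : ℂ, ‖z‖ ≤ 1 → ‖p.eval z‖ ≤ B := by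
  obtain ⟨B, hB⟩ := (isCompact_closedBall (0 : ℂ) 1).exists_bound_of_continuousOn
    (f := fun z => p.eval z) p.continuous.continuousOn
  refine ⟨max B 1, by positivity, fun z hz => (hB z ?_).trans (le_max_left _ _)⟩
  simpa using hz

/-! ### Polynomials peaking on a null set -/

/-- A compact null set on the circle is covered by finitely many discs of a common radius, the
radii having arbitrarily small sum. -/
lemma exists_cover (E : Set ℂ) (hE : E ⊆ sphere (0 : ℂ) 1) (hEclosed : IsClosed E)
    (hEnull : circleNull E) (η : ℝ) (hη : 0 < η) :
    ∃ δ : ℝ, 0 < δ ∧ ∃ J : Finset ℂ, (∀ ζ ∈ J, ‖ζ‖ = 1) ∧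
      (∀ z ∈ E, ∃ ζ ∈ J, ‖z - ζ‖ ≤ δ) ∧ (J.card : ℝ) * δ < η := by
  classical
  let e : ℝ → ℂ := fun θ => Complex.exp (θ * Complex.I)
  have he : Continuous e := by fun_prop
  let T : Set ℝ := Set.Icc 0 (2 * Real.pi) ∩ e ⁻¹' E
  have hT : IsCompact T := isCompact_Icc.inter_right (hEclosed.preimage he)
  have hT0 : volume T = 0 := measure_mono_null Set.inter_subset_right hEnull
  have h1 := tendsto_measure_cthickening_of_isCompact (μ := volume) hT
  rw [hT0] at h1
  have h2 : ∀ᶠ r in nhdsWithin (0 : ℝ) (Set.Ioi 0), volume (cthickening r T) < ENNReal.ofReal η :=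
    (h1.mono_left nhdsWithin_le_nhds).eventually_lt_const (by simpa using hη)
  obtain ⟨δ, hδ1, hδ0⟩ := (h2.and self_mem_nhdsWithin).exists
  have hδ0 : 0 < δ := hδ0
  let K : Finset ℕ := (Finset.range (⌊2 * Real.pi / δ⌋₊ + 1)).filter
    fun j => ∃ θ ∈ T, ⌊θ / δ⌋₊ = j
  have hfl : ∀ θ ∈ T, (⌊θ / δ⌋₊ : ℝ) * δ ≤ θ ∧ θ < ((⌊θ / δ⌋₊ : ℝ) + 1) * δ := by
    intro θ hθ
    have h0 : 0 ≤ θ / δ := div_nonneg hθ.1.1 hδ0.le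
    constructor
    · exact (le_div_iff₀ hδ0).1 (Nat.floor_le h0)
    · exact (div_lt_iff₀ hδ0).1 (Nat.lt_floor_add_one _)
  have hvol : volume (⋃ j ∈ K, Set.Ico ((j : ℝ) * δ) (((j : ℝ) + 1) * δ)) =
      ENNReal.ofReal (K.card * δ) := by
    rw [measure_biUnion_finset]
    · have : ∀ j : ℕ, ((j : ℝ) + 1) * δ - j * δ = δ := fun j => by ring
      simp only [Real.volume_Ico, this, Finset.sum_const, nsmul_eq_mul]
      rw [ENNReal.ofReal_mul (by positivity), ENNReal.ofReal_natCast]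
    · intro i _ j _ hij
      rw [Function.onFun, Set.disjoint_left]
      rintro x ⟨h1, h2⟩ ⟨h3, h4⟩
      have h5 : (i : ℝ) < j + 1 := lt_of_mul_lt_mul_right (h1.trans_lt h4) hδ0.le
      have h6 : (j : ℝ) < i + 1 := lt_of_mul_lt_mul_right (h3.trans_lt h2) hδ0.le
      norm_cast at h5 h6
      omega
    · exact fun _ _ => measurableSet_Ico
  have hsub : (⋃ j ∈ K, Set.Ico ((j : ℝ) * δ) (((j : ℝ) + 1) * δ)) ⊆ cthickening δ T := by
    intro x hx
    simp only [Set.mem_iUnion] at hx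
    obtain ⟨j, hj, hx1, hx2⟩ := hx
    obtain ⟨θ, hθ, rfl⟩ := (Finset.mem_filter.1 hj).2
    have := hfl θ hθ
    refine mem_cthickening_of_dist_le x θ δ T hθ ?_
    rw [Real.dist_eq, abs_le]
    constructor <;> linarith
  refine ⟨δ, hδ0, K.image fun j : ℕ => e (j * δ), ?_, ?_, ?_⟩
  · intro ζ hζ
    obtain ⟨j, _, rfl⟩ := Finset.mem_image.1 hζ
    exact Complex.norm_exp_ofReal_mul_I _
  · intro z hz
    have hz1 : ‖z‖ = 1 := by simpa using hE hz
    obtain ⟨θ, hθ, rfl⟩ : ∃ θ ∈ Set.Icc 0 (2 * Real.pi), e θ = z := by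
      refine ⟨toIcoMod Real.two_pi_pos 0 z.arg, ?_, ?_⟩
      · have := toIcoMod_mem_Ico Real.two_pi_pos 0 z.arg
        exact ⟨this.1, by simpa using this.2.le⟩
      · have h3 : e z.arg = z := by
          have := Complex.norm_mul_exp_arg_mul_I z
          rwa [hz1, Complex.ofReal_one, one_mul] at this
        conv_rhs => rw [← h3]
        have := self_sub_toIcoDiv_zsmul Real.two_pi_pos 0 z.arg
        rw [← this]
        simp only [e]
        push_cast
        rw [sub_mul, Complex.exp_sub]
        have h4 := Complex.exp_int_mul_two_pi_mul_I (toIcoDiv Real.two_pi_pos 0 z.arg)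
        simp only [zsmul_eq_mul]
        rw [mul_assoc (_ : ℂ) (2 * (Real.pi : ℂ)), h4, div_one]
    have hθT : θ ∈ T := ⟨hθ, hz⟩
    refine ⟨e (⌊θ / δ⌋₊ * δ), Finset.mem_image.2 ⟨⌊θ / δ⌋₊, ?_, rfl⟩, ?_⟩
    · refine Finset.mem_filter.2 ⟨Finset.mem_range.2 (Nat.lt_succ_of_le ?_), θ, hθT, rfl⟩
      exact Nat.floor_le_floor (by gcongr; exact hθ.2)
    · have h5 := Real.norm_exp_I_mul_ofReal_sub_one_le (x := θ - ⌊θ / δ⌋₊ * δ)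
      have h6 : e θ - e (⌊θ / δ⌋₊ * δ) = e (⌊θ / δ⌋₊ * δ) *
          (Complex.exp (Complex.I * ((θ - ⌊θ / δ⌋₊ * δ : ℝ) : ℂ)) - 1) := by
        rw [mul_sub, mul_one]
        simp only [e]
        rw [← Complex.exp_add]
        congr 2
        push_cast
        ring
      rw [h6, norm_mul, show ‖e (⌊θ / δ⌋₊ * δ)‖ = 1 from Complex.norm_exp_ofReal_mul_I _, one_mul]
      refine h5.trans ?_
      have := hfl θ hθT
      rw [Real.norm_eq_abs, abs_le]
      constructor <;> linarith
  · have h7 : ENNReal.ofReal (K.card * δ) < ENNReal.ofReal η :=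
      hvol ▸ (measure_mono hsub).trans_lt hδ1
    have h8 := (ENNReal.ofReal_lt_ofReal_iff hη).1 h7
    refine lt_of_le_of_lt ?_ h8
    gcongr
    exact Finset.card_image_le

/-- A polynomial substitute for the half-plane kernel `1 + (A + z) / (A - z)`, `A = (1 + δ) ζ`:
its real part is nonnegative on the disc and at least `1 / (2δ)` on the circle near `ζ`. -/
lemma exists_kernel (ζ : ℂ) (hζ : ‖ζ‖ = 1) (δ : ℝ) (hδ : 0 < δ) :
    ∃ p : ℂ[X], p.eval 0 = 2 ∧ (∀ z : ℂ, ‖z‖ ≤ 1 → 0 ≤ (p.eval z).re) ∧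
      ∀ z : ℂ, ‖z‖ = 1 → ‖z - ζ‖ ≤ δ → 1 / (2 * δ) ≤ (p.eval z).re := by
  set A : ℂ := (1 + δ) * ζ with hA
  have hAn : ‖A‖ = 1 + δ := by
    rw [hA, norm_mul, hζ, mul_one]
    have : (1 + δ : ℂ) = ((1 + δ : ℝ) : ℂ) := by push_cast; rfl
    rw [this, Complex.norm_real, Real.norm_of_nonneg (by positivity)]
  have hA0 : A ≠ 0 := by
    rw [← norm_ne_zero_iff, hAn]; positivity
  set ρ : ℝ := 1 / (1 + δ) with hρ
  have hρ0 : 0 < ρ := by positivity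
  have hρ1 : ρ < 1 := by
    rw [hρ, div_lt_one (by positivity)]; linarith
  have h1 : Tendsto (fun n : ℕ => 2 * ρ ^ n / (1 - ρ)) atTop (nhds (2 * 0 / (1 - ρ))) :=
    ((tendsto_pow_atTop_nhds_zero_of_lt_one hρ0.le hρ1).const_mul 2).div_const _
  rw [mul_zero, zero_div] at h1
  obtain ⟨n, hn, hn1⟩ := ((h1.eventually_lt_const one_pos).and (eventually_ge_atTop 1)).exists
  -- `1 + G_n`, where `G_n = -1 + 2 ∑_{k<n} (z/A)^k` truncates `(A + z) / (A - z)`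
  set p : ℂ[X] := 2 * ∑ k ∈ Finset.range n, (C A⁻¹ * X) ^ k with hp
  have hev : ∀ z, p.eval z = 2 * ∑ k ∈ Finset.range n, (z / A) ^ k := fun z => by
    simp [hp, eval_finsetSum, div_eq_inv_mul]
  have key : ∀ z : ℂ, ‖z‖ ≤ 1 → ((‖A‖ ^ 2 - ‖z‖ ^ 2) / ‖A - z‖ ^ 2) ≤ (p.eval z).re := by
    intro z hz
    have hAz : A - z ≠ 0 := by
      intro h
      have : ‖A‖ = ‖z‖ := by rw [sub_eq_zero.1 h]
      linarith
    have hw : ‖z / A‖ ≤ ρ := by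
      rw [norm_div, hAn, hρ]
      gcongr
    have hw1 : z / A ≠ 1 := fun h => by
      rw [h, norm_one] at hw
      linarith
    have hw2 : 1 - z / A ≠ 0 := sub_ne_zero.2 hw1.symm
    have e1 : (A + z) / (A - z) + 1 - p.eval z = 2 * (z / A) ^ n / (1 - z / A) := by
      have e0 : (A + z) / (A - z) + 1 = 2 / (1 - z / A) := by
        have : 1 - z / A = (A - z) / A := by field_simp
        rw [this]
        field_simp
        ring
      rw [hev, geom_sum_eq hw1, e0, ← neg_sub 1 (z / A), div_neg, ← neg_div]
      field_simp
      ring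
    have e2 : ‖(A + z) / (A - z) + 1 - p.eval z‖ ≤ 1 := by
      rw [e1]
      refine le_trans ?_ hn.le
      rw [norm_div, norm_mul, norm_pow, Complex.norm_two]
      have : 1 - ρ ≤ ‖1 - z / A‖ := by
        have := norm_sub_norm_le 1 (z / A)
        rw [norm_one] at this
        linarith
      have h5 : 0 < 1 - ρ := by linarith
      gcongr
    have e3 : ((A + z) / (A - z)).re = (‖A‖ ^ 2 - ‖z‖ ^ 2) / ‖A - z‖ ^ 2 := by
      rw [Complex.div_re, ← Complex.normSq_eq_norm_sq, ← Complex.normSq_eq_norm_sq,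
        ← Complex.normSq_eq_norm_sq, ← add_div]
      congr 1
      simp only [Complex.add_re, Complex.sub_re, Complex.add_im, Complex.sub_im,
        Complex.normSq_apply]
      ring
    have e4 := (Complex.re_le_norm ((A + z) / (A - z) + 1 - p.eval z)).trans e2
    simp only [Complex.sub_re, Complex.add_re, Complex.one_re] at e4
    linarith [e3]
  refine ⟨p, ?_, fun z hz => ?_, fun z hz hzζ => ?_⟩
  · rw [hev, zero_div, Finset.sum_eq_single 0] <;> simp
    omega
  · refine le_trans ?_ (key z hz)
    have : ‖z‖ ^ 2 ≤ ‖A‖ ^ 2 := by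
      gcongr
      linarith
    exact div_nonneg (by linarith) (by positivity)
  · refine le_trans ?_ (key z hz.le)
    have h2 : ‖A - z‖ ≤ 2 * δ := by
      have : A - z = δ * ζ - (z - ζ) := by rw [hA]; ring
      rw [this]
      refine (norm_sub_le _ _).trans ?_
      rw [norm_mul, hζ, Complex.norm_real, Real.norm_of_nonneg hδ.le]
      linarith
    have h3 : 0 < ‖A - z‖ := by
      have := norm_sub_norm_le A z
      linarith
    rw [hAn, hz]
    calc 1 / (2 * δ) = (2 * δ) / (2 * δ) ^ 2 := by field_simp
      _ ≤ ((1 + δ) ^ 2 - 1 ^ 2) / ‖A - z‖ ^ 2 := by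
        gcongr
        · nlinarith
        · nlinarith

/-- The sum of the kernels at the centres of a cover of `E` by discs of small total radius, scaled
by the common radius. -/
lemma exists_large_re (E : Set ℂ) (hE : E ⊆ sphere (0 : ℂ) 1) (hEclosed : IsClosed E)
    (hEnull : circleNull E) (M η : ℝ) (hM : 0 < M) (hη : 0 < η) :
    ∃ F : ℂ[X], ∃ a : ℝ, F.eval 0 = a ∧ 0 ≤ a ∧ a ≤ η ∧
      (∀ z : ℂ, ‖z‖ ≤ 1 → 0 ≤ (F.eval z).re) ∧ ∀ z ∈ E, M ≤ (F.eval z).re := by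
  obtain ⟨δ, hδ, J, hJ1, hJE, hJ⟩ :=
    exists_cover E hE hEclosed hEnull (η / (4 * M)) (by positivity)
  choose! p hp0 hp1 hp2 using fun ζ (hζ : ζ ∈ J) => exists_kernel ζ (hJ1 ζ hζ) δ hδ
  have hev : ∀ z, (C ((2 * M * δ : ℝ) : ℂ) * ∑ ζ ∈ J, p ζ).eval z =
      ((2 * M * δ : ℝ) : ℂ) * ∑ ζ ∈ J, (p ζ).eval z := fun z => by
    simp only [eval_mul, eval_C, eval_finsetSum]
  have hre : ∀ z, ((C ((2 * M * δ : ℝ) : ℂ) * ∑ ζ ∈ J, p ζ).eval z).re =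
      (2 * M * δ) * ∑ ζ ∈ J, ((p ζ).eval z).re := fun z => by
    rw [hev, Complex.re_ofReal_mul, Complex.re_sum]
  refine ⟨C ((2 * M * δ : ℝ) : ℂ) * ∑ ζ ∈ J, p ζ, 4 * M * (J.card * δ), ?_, by positivity, ?_,
    fun z hz => ?_, fun z hz => ?_⟩
  · rw [hev, Finset.sum_congr rfl hp0]
    simp
    ring
  · have := (lt_div_iff₀ (by positivity)).1 hJ
    linarith
  · rw [hre]
    exact mul_nonneg (by positivity) (Finset.sum_nonneg fun ζ hζ => hp1 ζ hζ z hz)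
  · have hz1 : ‖z‖ = 1 := by simpa using hE hz
    obtain ⟨ζ, hζ, hzζ⟩ := hJE z hz
    rw [hre]
    have h1 : 1 / (2 * δ) ≤ ∑ ζ ∈ J, ((p ζ).eval z).re :=
      (hp2 ζ hζ z hz1 hzζ).trans (Finset.single_le_sum
        (f := fun ζ => ((p ζ).eval z).re) (fun ξ hξ => hp1 ξ hξ z hz1.le) hζ)
    calc M = (2 * M * δ) * (1 / (2 * δ)) := by field_simp
      _ ≤ _ := by gcongr

/-- Polynomials that are bounded on the disc, nearly `1` on `E` and small in `H²`: they
approximate `1 - exp (-F)`, where `Re F ≥ 0` is large on `E` and `F 0` is small. -/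
lemma exists_peak (E : Set ℂ) (hE : E ⊆ sphere (0 : ℂ) 1) (hEclosed : IsClosed E)
    (hEnull : circleNull E) (ε : ℝ) (hε : 0 < ε) :
    ∃ k : ℂ[X], (∀ z : ℂ, ‖z‖ ≤ 1 → ‖k.eval z‖ ≤ 3) ∧ (∀ z ∈ E, ‖k.eval z - 1‖ < ε) ∧
      ‖mulOp k e0‖ < ε := by
  obtain ⟨F, a, hF0, ha0, ha, hF1, hF2⟩ := exists_large_re E hE hEclosed hEnull (2 / ε) (ε ^ 2 / 8)
    (by positivity) (by positivity)
  obtain ⟨B, hB0, hB⟩ := poly_bound F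
  set τ : ℝ := min 1 (min (ε / 2) (ε ^ 2 / 20)) with hτ
  have hτ0 : 0 < τ := by positivity
  have hτ1 : τ ≤ 1 := min_le_left _ _
  have hτ2 : τ ≤ ε / 2 := (min_le_right _ _).trans (min_le_left _ _)
  have hτ3 : τ ≤ ε ^ 2 / 20 := (min_le_right _ _).trans (min_le_right _ _)
  obtain ⟨n, hn⟩ := (expTrunc_unif B τ hτ0).exists
  set t : ℂ[X] := (expTrunc n).comp (-F) with ht
  have ht1 : ∀ z : ℂ, ‖z‖ ≤ 1 → ‖Complex.exp (-F.eval z) - t.eval z‖ < τ := fun z hz => by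
    rw [ht, eval_comp, eval_neg]
    exact hn _ (by rw [norm_neg]; exact hB z hz)
  have ht2 : ∀ z : ℂ, ‖z‖ ≤ 1 → ‖t.eval z‖ ≤ Real.exp (-(F.eval z).re) + τ := fun z hz => by
    have h1 := norm_le_norm_add_norm_sub (Complex.exp (-F.eval z)) (t.eval z)
    rw [Complex.norm_exp, Complex.neg_re] at h1
    linarith [ht1 z hz]
  have ht3 : ∀ z : ℂ, ‖z‖ ≤ 1 → ‖t.eval z‖ ≤ 1 + τ := fun z hz => by
    have : Real.exp (-(F.eval z).re) ≤ 1 := Real.exp_le_one_iff.2 (by linarith [hF1 z hz])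
    linarith [ht2 z hz]
  refine ⟨1 - t, fun z hz => ?_, fun z hz => ?_, ?_⟩
  · rw [eval_sub, eval_one]
    have := norm_sub_le 1 (t.eval z)
    rw [norm_one] at this
    linarith [ht3 z hz]
  · have hz1 : ‖z‖ = 1 := by simpa using hE hz
    rw [eval_sub, eval_one, sub_sub_cancel_left, norm_neg]
    refine (ht2 z hz1.le).trans_lt ?_
    have h1 : Real.exp (-(F.eval z).re) ≤ Real.exp (-(2 / ε)) := by
      gcongr
      exact hF2 z hz
    have h2 : Real.exp (-(2 / ε)) < ε / 2 := by
      rw [Real.exp_neg, inv_lt_comm₀ (Real.exp_pos _) (by positivity), inv_div]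
      linarith [Real.add_one_le_exp (2 / ε)]
    linarith
  · have h1 : ‖mulOp t e0‖ ≤ 1 + τ := by
      have := mulOp_e0_norm_le t 1 (1 + τ) (by positivity) fun z hz => by
        simpa using ht3 z hz
      simpa [mulOp_one, e0_norm] using this
    have h2 : RCLike.re (inner ℂ e0 (mulOp t e0)) = (t.eval 0).re := by
      rw [e0, lp.inner_single_left, ← e0, mulOp_e0_apply, coeff_zero_eq_eval_zero]
      simp
    have h3 : 1 - a - τ ≤ (t.eval 0).re := by
      have h4 := (Complex.re_le_norm _).trans (ht1 0 (by simp)).le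
      rw [hF0, Complex.sub_re, ← Complex.ofReal_neg, Complex.exp_ofReal_re] at h4
      linarith [Real.add_one_le_exp (-a)]
    have h5 : ‖mulOp (1 - t) e0‖ ^ 2 = 1 - 2 * (t.eval 0).re + ‖mulOp t e0‖ ^ 2 := by
      rw [mulOp_sub, mulOp_one, _root_.sub_apply, one_apply_eq_self,
        norm_sub_sq (𝕜 := ℂ), e0_norm, h2]
      ring
    have h6 : ‖mulOp t e0‖ ^ 2 ≤ (1 + τ) ^ 2 := pow_le_pow_left₀ (norm_nonneg _) h1 2
    refine lt_of_pow_lt_pow_left₀ 2 hε.le ?_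
    rw [h5]
    nlinarith [pow_pos hε 2]

/-! ### Approximation on `E` by polynomials and by zero-free polynomials -/

/-- Polynomials are dense in `C(E)`. By Stone–Weierstrass it is enough to approximate
`conj z = 1 / z`, which `(k z - k 0) / z` does for a peaking polynomial `k`. -/
lemma exists_poly_near (E : Set ℂ) (hE : E ⊆ sphere (0 : ℂ) 1) (hEclosed : IsClosed E)
    (hEnull : circleNull E) (g : ℂ → ℂ) (hg : ContinuousOn g E) (ε : ℝ) (hε : 0 < ε) :
    ∃ v : ℂ[X], ∀ z ∈ E, ‖v.eval z - g z‖ < ε := by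
  have hEc : IsCompact E := (isCompact_sphere (0 : ℂ) 1).of_isClosed_subset hEclosed hE
  have : CompactSpace E := isCompact_iff_compactSpace.1 hEc
  set A : Subalgebra ℂ C(E, ℂ) := (polynomialFunctions E).topologicalClosure with hA
  have hpA : ∀ p : ℂ[X], p.toContinuousMapOn E ∈ A := fun p =>
    subset_closure ⟨p, by simp, rfl⟩
  have hall : ∀ f : C(E, ℂ), f ∈ A := by
    intro f
    refine ContinuousMap.induction_on_of_compact (p := fun f => f ∈ A) ?_ ?_ ?_
      (fun f g => A.add_mem) (fun f g => A.mul_mem) ?_ f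
    · intro r
      exact A.algebraMap_mem r
    · convert hpA X using 1
      exact (toContinuousMapOn_X_eq_restrict_id E).symm
    · change _ ∈ closure _
      rw [Metric.mem_closure_iff]
      intro ε hε
      obtain ⟨k, _, hk1, hk2⟩ := exists_peak E hE hEclosed hEnull (ε / 4) (by positivity)
      refine ⟨(divX k).toContinuousMapOn E, ⟨divX k, by simp, rfl⟩, ?_⟩
      refine lt_of_le_of_lt ((ContinuousMap.dist_le (by positivity : 0 ≤ ε / 2)).2 fun z => ?_)
        (half_lt_self hε)
      have hz1 : ‖(z : ℂ)‖ = 1 := by simpa using hE z.2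
      have h1 : (divX k).eval (z : ℂ) * z + k.coeff 0 = k.eval (z : ℂ) := by
        conv_rhs => rw [← divX_mul_X_add k]
        simp
      have h2 : ‖k.coeff 0‖ < ε / 4 := (coeff_norm_le k 0).trans_lt hk2
      have h3 := hk1 z z.2
      have h4 : star (z : ℂ) * z = 1 := by
        have := Complex.conj_mul' (z : ℂ)
        rw [hz1] at this
        simpa using this
      have h5 : star (z : ℂ) - (divX k).eval (z : ℂ)
          = star (z : ℂ) * (k.coeff 0 - (k.eval (z : ℂ) - 1)) := by
        rw [← h1]
        linear_combination ((divX k).eval (z : ℂ)) * h4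
      change dist (star (z : ℂ)) ((divX k).eval (z : ℂ)) ≤ _
      rw [dist_eq_norm, h5, norm_mul, norm_star, hz1, one_mul]
      refine (norm_sub_le _ _).trans ?_
      linarith
    · intro f hf
      have : f ∈ closure (A : Set C(E, ℂ)) := mem_closure_iff_frequently.2 hf
      rwa [IsClosed.closure_eq (Subalgebra.isClosed_topologicalClosure _)] at this
  have hgA : (⟨E.domRestrict g, hg.domRestrict⟩ : C(E, ℂ)) ∈ closure
      (polynomialFunctions E : Set C(E, ℂ)) := hall _
  rw [Metric.mem_closure_iff] at hgA
  obtain ⟨_, ⟨v, _, rfl⟩, hv⟩ := hgA ε hε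
  refine ⟨v, fun z hz => ?_⟩
  have := (ContinuousMap.dist_apply_le_dist (⟨z, hz⟩ : E)).trans_lt hv
  rw [dist_comm, dist_eq_norm] at this
  exact this

/-- Every continuous function on `E` is a uniform limit of functions `P₀ exp v`, `v` a polynomial.
A polynomial `G` near `g / P₀` maps `E` to a set whose imaginary part is null, so that a
small imaginary translate of `G` maps `E` into the slit plane, where a logarithm exists. -/
lemma exists_exp_near (E : Set ℂ) (hE : E ⊆ sphere (0 : ℂ) 1) (hEclosed : IsClosed E)
    (hEnull : circleNull E) (P₀ : ℂ[X]) (hP₀ : ∀ z : ℂ, ‖z‖ ≤ 1 → P₀.eval z ≠ 0)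
    (g : ℂ → ℂ) (hg : ContinuousOn g E) (ε : ℝ) (hε : 0 < ε) :
    ∃ v : ℂ[X], ∀ z ∈ E, ‖P₀.eval z * Complex.exp (v.eval z) - g z‖ < ε := by
  have hE1 : ∀ z ∈ E, ‖z‖ ≤ 1 := fun z hz => by simpa using (mem_sphere_iff_norm.1 (hE hz)).le
  obtain ⟨B, hB0, hB⟩ := poly_bound P₀
  set ε₁ : ℝ := ε / (8 * B) with hε₁
  have hε₁0 : 0 < ε₁ := by positivity
  obtain ⟨G, hG⟩ := exists_poly_near E hE hEclosed hEnull (fun z => g z / P₀.eval z)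
    (hg.div P₀.continuous.continuousOn fun z hz => hP₀ z (hE1 z hz)) ε₁ hε₁0
  obtain ⟨B₁, hB₁0, hB₁⟩ := poly_bound G
  let h : ℝ → ℝ := fun θ => (G.eval (Complex.exp (θ * Complex.I))).im
  have hd : Differentiable ℝ h := by
    have h1 : Differentiable ℝ fun θ : ℝ => G.eval (Complex.exp (θ * Complex.I)) := by
      have h2 : Differentiable ℝ fun θ : ℝ => Complex.exp (θ * Complex.I) := by
        have : Differentiable ℝ fun θ : ℝ => (θ : ℂ) := Complex.ofRealCLM.differentiable
        fun_prop
      have h3 : Differentiable ℝ fun w : ℂ => G.eval w :=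
        G.differentiable.restrictScalars ℝ
      exact h3.comp h2
    exact Complex.imCLM.differentiable.comp h1
  have hnull : volume (h '' {θ : ℝ | Complex.exp (θ * Complex.I) ∈ E}) = 0 :=
    addHaar_image_eq_zero_of_differentiableOn_of_addHaar_eq_zero volume hd.differentiableOn hEnull
  obtain ⟨s, ⟨hs0, hs1⟩, hs⟩ : ∃ s ∈ Set.Ioo 0 ε₁,
      s ∉ h '' {θ : ℝ | Complex.exp (θ * Complex.I) ∈ E} := by
    by_contra! hcon
    have h1 := measure_mono_null (fun s hs => hcon s hs) hnull
    rw [Real.volume_Ioo, sub_zero, ENNReal.ofReal_eq_zero] at h1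
    linarith
  have hslit : ∀ z ∈ E, G.eval z - s * Complex.I ∈ Complex.slitPlane := by
    intro z hz
    refine Complex.mem_slitPlane_iff.2 (Or.inr fun him => hs ?_)
    have hz1 : ‖z‖ = 1 := by simpa using hE hz
    have hzarg : Complex.exp (z.arg * Complex.I) = z := by
      have := Complex.norm_mul_exp_arg_mul_I z
      rwa [hz1, Complex.ofReal_one, one_mul] at this
    refine ⟨z.arg, by simpa [hzarg] using hz, ?_⟩
    simp only [h, hzarg]
    simpa [sub_eq_zero] using him
  set η : ℝ := min 1 (ε / (8 * B * (B₁ + ε₁))) with hη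
  have hη0 : 0 < η := by positivity
  obtain ⟨v, hv⟩ := exists_poly_near E hE hEclosed hEnull
    (fun z => Complex.log (G.eval z - s * Complex.I))
    (ContinuousOn.clog (by fun_prop) hslit) η hη0
  refine ⟨v, fun z hz => ?_⟩
  set w : ℂ := G.eval z - s * Complex.I with hw
  have hw0 : w ≠ 0 := Complex.slitPlane_ne_zero (hslit z hz)
  have hsn : ‖(s : ℂ) * Complex.I‖ = s := by
    rw [norm_mul, Complex.norm_I, mul_one, Complex.norm_real, Real.norm_of_nonneg hs0.le]
  have hwn : ‖w‖ ≤ B₁ + ε₁ := by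
    refine (norm_sub_le _ _).trans ?_
    rw [hsn]
    linarith [hB₁ z (hE1 z hz)]
  have e1 : ‖Complex.exp (v.eval z) - w‖ ≤ (B₁ + ε₁) * (2 * η) := by
    have h1 : Complex.exp (v.eval z) - w = w * (Complex.exp (v.eval z - Complex.log w) - 1) := by
      rw [Complex.exp_sub, Complex.exp_log hw0]
      field_simp
    rw [h1, norm_mul]
    have h2 := hv z hz
    gcongr
    exact (Complex.norm_exp_sub_one_le (h2.le.trans (min_le_left _ _))).trans (by gcongr)
  have e2 : ‖w - g z / P₀.eval z‖ ≤ 2 * ε₁ := by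
    have h1 : w - g z / P₀.eval z = (G.eval z - g z / P₀.eval z) - s * Complex.I := by
      rw [hw]; ring
    rw [h1]
    refine (norm_sub_le _ _).trans ?_
    rw [hsn]
    linarith [hG z hz]
  have hPz := hP₀ z (hE1 z hz)
  have e3 : P₀.eval z * Complex.exp (v.eval z) - g z = P₀.eval z *
      ((Complex.exp (v.eval z) - w) + (w - g z / P₀.eval z)) := by
    field_simp
    ring
  rw [e3, norm_mul]
  calc _ ≤ B * ((B₁ + ε₁) * (2 * η) + 2 * ε₁) := by
        gcongr
        · exact hB z (hE1 z hz)
        · exact (norm_add_le _ _).trans (add_le_add e1 e2)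
    _ ≤ B * ((B₁ + ε₁) * (2 * (ε / (8 * B * (B₁ + ε₁)))) + 2 * ε₁) := by
        gcongr
        exact min_le_right _ _
    _ = ε / 2 := by
        rw [hε₁]
        field_simp
        norm_num
    _ < ε := half_lt_self hε

/-- The functions `1 / P`, with `P` a polynomial without zeros on the closed disc. -/
def recipSet : Set H2 :=
  {f | ∃ P : ℂ[X], (∀ z : ℂ, ‖z‖ ≤ 1 → P.eval z ≠ 0) ∧ mulOp P f = e0}

/-- Simultaneous approximation: near `f₀ = 1 / P₀` in `H²` there is `1 / P` with `P` close to `g`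
on `E`. Here `P` is `P₀ T(v k)`, with `P₀ exp v` close to `g` on `E`, `k` a peaking polynomial and
`T` a long Taylor polynomial of the exponential. -/
lemma exists_recip_near (E : Set ℂ) (hE : E ⊆ sphere (0 : ℂ) 1) (hEclosed : IsClosed E)
    (hEnull : circleNull E) (P₀ : ℂ[X]) (hP₀ : ∀ z : ℂ, ‖z‖ ≤ 1 → P₀.eval z ≠ 0)
    (f₀ : H2) (hf₀ : mulOp P₀ f₀ = e0)
    (g : ℂ → ℂ) (hg : ContinuousOn g E) (ε : ℝ) (hε : 0 < ε) :
    ∃ P : ℂ[X], (∀ z : ℂ, ‖z‖ ≤ 1 → P.eval z ≠ 0) ∧ (∀ z ∈ E, ‖P.eval z - g z‖ < ε) ∧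
      ∃ f : H2, mulOp P f = e0 ∧ ‖f - f₀‖ < ε := by
  have hE1 : ∀ z ∈ E, ‖z‖ ≤ 1 := fun z hz => by simpa using (mem_sphere_iff_norm.1 (hE hz)).le
  obtain ⟨v, hv⟩ := exists_exp_near E hE hEclosed hEnull P₀ hP₀ g hg (ε / 3) (by positivity)
  obtain ⟨B₀, hB₀0, hB₀⟩ := poly_bound P₀
  obtain ⟨B, hB0, hB⟩ := poly_bound v
  have hU₀ := mulOp_isUnit P₀ hP₀
  set R : H2 →L[ℂ] H2 := Ring.inverse (mulOp P₀) with hR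
  have hRP : R * mulOp P₀ = 1 := Ring.inverse_mul_cancel _ hU₀
  set c : ℝ := B * Real.exp (B * 3) with hc
  have hc0 : 0 < c := by positivity
  set κ : ℝ := min (1 / B) (min (ε / (6 * B₀ * Real.exp B * B)) (ε / (2 * (‖R‖ + 1) * c))) with hκ
  have hκ0 : 0 < κ := by positivity
  have hκ1 : κ ≤ 1 / B := min_le_left _ _
  have hκ2 : κ ≤ ε / (6 * B₀ * Real.exp B * B) := (min_le_right _ _).trans (min_le_left _ _)
  have hκ3 : κ ≤ ε / (2 * (‖R‖ + 1) * c) := (min_le_right _ _).trans (min_le_right _ _)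
  obtain ⟨k, hk1, hk2, hk3⟩ := exists_peak E hE hEclosed hEnull κ hκ0
  set u : ℂ[X] := v * k with hu
  have hun : ∀ z : ℂ, ‖z‖ ≤ 1 → ‖u.eval z‖ ≤ B * 3 := fun z hz => by
    rw [hu, eval_mul, norm_mul]
    have h1 := hB z hz
    have h2 := hk1 z hz
    gcongr
  set P : ℕ → ℂ[X] := fun n => P₀ * (expTrunc n).comp u with hP
  have hPe : ∀ n z, (P n).eval z = P₀.eval z * (expTrunc n).eval (u.eval z) := fun n z => by
    simp [hP]
  have hPop : ∀ n, mulOp (P n) = mulOp P₀ * aeval (mulOp u) (expTrunc n) := fun n => by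
    rw [hP, mulOp_mul]
    congr 1
    exact aeval_comp _
  let _ : NormedAlgebra ℚ (H2 →L[ℂ] H2) := NormedAlgebra.restrictScalars ℚ ℂ _
  set Ex : H2 →L[ℂ] H2 := NormedSpace.exp (mulOp u)
  set Ex' : H2 →L[ℂ] H2 := NormedSpace.exp (-mulOp u)
  have hEx : Ex * Ex' = 1 := by
    rw [← NormedSpace.exp_add_of_commute (Commute.refl (mulOp u)).neg_right, add_neg_cancel,
      NormedSpace.exp_zero]
  have hEx' : Ex' * Ex = 1 := by
    rw [← NormedSpace.exp_add_of_commute (Commute.refl (mulOp u)).neg_left, neg_add_cancel,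
      NormedSpace.exp_zero]
  have hUE : IsUnit (mulOp P₀ * Ex) := hU₀.mul ⟨⟨Ex, Ex', hEx, hEx'⟩, rfl⟩
  -- the limit of the functions `1 / P n` in `H²`
  set fl : H2 := Ex' f₀ with hfl
  have hflim : Ring.inverse (mulOp P₀ * Ex) e0 = fl := by
    have h1 : (mulOp P₀ * Ex) fl = e0 := by
      have : (mulOp P₀ * Ex) fl = mulOp P₀ ((Ex * Ex') f₀) := rfl
      rw [this, hEx]
      exact hf₀
    rw [← h1, ← mul_apply_eq_comp, Ring.inverse_mul_cancel _ hUE]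
    rfl
  have hlim : Tendsto (fun n => Ring.inverse (mulOp (P n)) e0) atTop (nhds fl) := by
    have h1 : Tendsto (fun n => mulOp (P n)) atTop (nhds (mulOp P₀ * Ex)) := by
      simp only [hPop]
      exact (expTrunc_aeval_tendsto _).const_mul _
    obtain ⟨x, hx⟩ := hUE
    have h2 := (NormedRing.inverse_continuousAt x).tendsto
    rw [hx] at h2
    have h3 := h2.comp h1
    have h4 := ((ContinuousLinearMap.apply ℂ H2 e0).continuous.tendsto _).comp h3
    rw [← hflim]
    exact h4
  have hfl_near : ‖fl - f₀‖ ≤ ε / 2 := by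
    have h1 : Tendsto (fun n => ‖mulOp ((expTrunc n).comp (-u) - 1) f₀‖) atTop
        (nhds ‖fl - f₀‖) := by
      have h2 : ∀ n, mulOp ((expTrunc n).comp (-u) - 1) f₀ =
          aeval (-mulOp u) (expTrunc n) f₀ - f₀ := fun n => by
        rw [mulOp_sub, mulOp_one]
        have : mulOp ((expTrunc n).comp (-u)) = aeval (-mulOp u) (expTrunc n) := by
          rw [show -mulOp u = mulOp (-u) by simp [mulOp]]
          exact aeval_comp _
        rw [this]
        rfl
      simp only [h2]
      have h4 := ((ContinuousLinearMap.apply ℂ H2 f₀).continuous.tendsto _).comp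
        (expTrunc_aeval_tendsto (-mulOp u))
      exact (h4.sub_const f₀).norm
    refine le_of_tendsto h1 ?_
    filter_upwards [eventually_ge_atTop 1] with n hn
    set q : ℂ[X] := (expTrunc n).comp (-u) - 1 with hq
    have h5 : mulOp q f₀ = R (mulOp q e0) := by
      rw [← hf₀, ← mulOp_mul_apply, mul_comm, mulOp_mul_apply, ← mul_apply_eq_comp R, hRP]
      rfl
    have h6 : ‖mulOp q e0‖ ≤ c * ‖mulOp k e0‖ := by
      refine mulOp_e0_norm_le q k c hc0.le fun z hz => ?_
      have h7 := norm_expTrunc_sub_one_le n hn (-u.eval z)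
      rw [norm_neg] at h7
      rw [hq, eval_sub, eval_comp, eval_neg, eval_one]
      refine h7.trans ?_
      have h8 : ‖u.eval z‖ ≤ B * ‖k.eval z‖ := by
        rw [hu, eval_mul, norm_mul]
        have h1 := hB z hz
        gcongr
      calc _ ≤ (B * ‖k.eval z‖) * Real.exp (B * 3) := by
            gcongr
            exact hun z hz
        _ = _ := by rw [hc]; ring
    rw [h5]
    refine (ContinuousLinearMap.le_opNorm _ _).trans ?_
    calc ‖R‖ * ‖mulOp q e0‖ ≤ (‖R‖ + 1) * (c * (ε / (2 * (‖R‖ + 1) * c))) := by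
          gcongr
          · linarith
          · exact h6.trans (by gcongr; exact hk3.le.trans hκ3)
      _ = ε / 2 := by
          field_simp
  obtain ⟨n, ⟨hn1, hn2⟩, hn3⟩ := (((expTrunc_unif (B * 3) (ε / (3 * B₀)) (by positivity)).and
    (expTrunc_unif (B * 3) (Real.exp (-(B * 3))) (by positivity))).and
    (hlim.eventually (Metric.ball_mem_nhds fl (half_pos hε)))).exists
  have hPn : ∀ z : ℂ, ‖z‖ ≤ 1 → (P n).eval z ≠ 0 := by
    intro z hz h0
    rw [hPe] at h0
    have h1 := (mul_eq_zero.1 h0).resolve_left (hP₀ z hz)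
    have h2 := hn2 _ (hun z hz)
    rw [h1, sub_zero, Complex.norm_exp, Real.exp_lt_exp] at h2
    have h3 := Complex.abs_re_le_norm (u.eval z)
    have h4 := neg_abs_le (u.eval z).re
    linarith [hun z hz]
  refine ⟨P n, hPn, fun z hz => ?_, Ring.inverse (mulOp (P n)) e0, ?_, ?_⟩
  · have hz1 := hE1 z hz
    have d1 : ‖P₀.eval z * ((expTrunc n).eval (u.eval z) - Complex.exp (u.eval z))‖ ≤ ε / 3 := by
      rw [norm_mul, norm_sub_rev]
      calc _ ≤ B₀ * (ε / (3 * B₀)) := by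
            gcongr
            · exact hB₀ z hz1
            · exact (hn1 _ (hun z hz1)).le
        _ = _ := by field_simp
    have d2 : ‖P₀.eval z * (Complex.exp (u.eval z) - Complex.exp (v.eval z))‖ ≤ ε / 3 := by
      have h1 : Complex.exp (u.eval z) - Complex.exp (v.eval z) =
          Complex.exp (v.eval z) * (Complex.exp (v.eval z * (k.eval z - 1)) - 1) := by
        rw [mul_sub, ← Complex.exp_add, hu, eval_mul]
        ring_nf
      have h2 : ‖v.eval z * (k.eval z - 1)‖ ≤ B * κ := by
        rw [norm_mul]
        have h1 := hB z hz1
        have h2 := (hk2 z hz).le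
        gcongr
      have h3 : B * κ ≤ 1 := by
        calc B * κ ≤ B * (1 / B) := by gcongr
          _ = 1 := by field_simp
      have h4 := Complex.norm_exp_sub_one_le (h2.trans h3)
      have h5 : ‖Complex.exp (v.eval z)‖ ≤ Real.exp B := by
        rw [Complex.norm_exp, Real.exp_le_exp]
        exact (Complex.re_le_norm _).trans (hB z hz1)
      rw [h1, norm_mul, norm_mul]
      calc _ ≤ B₀ * (Real.exp B * (2 * (B * (ε / (6 * B₀ * Real.exp B * B))))) := by
            gcongr
            · exact hB₀ z hz1
            · exact h4.trans (by gcongr; exact h2.trans (by gcongr))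
        _ = _ := by field_simp; norm_num
    have d3 := hv z hz
    have : (P n).eval z - g z =
        P₀.eval z * ((expTrunc n).eval (u.eval z) - Complex.exp (u.eval z)) +
        P₀.eval z * (Complex.exp (u.eval z) - Complex.exp (v.eval z)) +
        (P₀.eval z * Complex.exp (v.eval z) - g z) := by
      rw [hPe]; ring
    rw [this]
    refine (norm_add₃_le).trans_lt ?_
    linarith
  · rw [← mul_apply_eq_comp, Ring.mul_inverse_cancel _ (mulOp_isUnit _ hPn)]
    rfl
  · have h1 := norm_sub_le_norm_sub_add_norm_sub (Ring.inverse (mulOp (P n)) e0) fl f₀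
    have h2 := mem_ball_iff_norm.1 hn3
    linarith

/-! ### The Baire category argument -/

lemma exists_poly_approx (h : H2) (ε : ℝ) (hε : 0 < ε) :
    ∃ p : ℂ[X], ‖mulOp p e0 - h‖ < ε := by
  have h1 := (lp.hasSum_single (p := 2) (by norm_num) h).tendsto_sum_nat
  obtain ⟨n, hn⟩ := (h1.eventually (Metric.ball_mem_nhds h hε)).exists
  refine ⟨∑ i ∈ Finset.range n, monomial i (h i), ?_⟩
  have h2 : mulOp (∑ i ∈ Finset.range n, monomial i (h i)) e0 =
      ∑ i ∈ Finset.range n, lp.single 2 i (h i) := by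
    ext m
    rw [mulOp_e0_apply, finsetSum_coeff, lp.coeFn_sum, Finset.sum_apply]
    refine Finset.sum_congr rfl fun i _ => ?_
    rw [coeff_monomial, lp.coeFn_single, Pi.single_apply]
    by_cases him : i = m
    · subst him; simp
    · simp [him, Ne.symm him]
  rw [h2]
  exact mem_ball_iff_norm.1 hn

/-- An open set, dense in the closure of `recipSet`: some `Q_n(1/f)`, `n ≥ j`, is
`1/(j+1)`-close to `g` on `E`. The interior is taken because `f ↦ Q_n(1/f)` is only controlled near
`recipSet`. -/
def univSet (E : Set ℂ) (g : C(E, ℂ)) (j : ℕ) : Set H2 :=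
  interior {f | ∃ n ≥ j, ∀ z : E, ‖(opa n f).eval (z : ℂ) - g z‖ < 1 / ((j : ℝ) + 1)}

/-- The `f` with a polynomial multiple that is `1/(j+1)`-close to `1`. -/
def cycSet (j : ℕ) : Set H2 := {f | ∃ p : ℂ[X], ‖mulOp p f - e0‖ < 1 / ((j : ℝ) + 1)}

lemma cycSet_isOpen (j : ℕ) : IsOpen (cycSet j) := by
  have : cycSet j = ⋃ p : ℂ[X], {f | ‖mulOp p f - e0‖ < 1 / ((j : ℝ) + 1)} := by
    ext f; simp [cycSet]
  rw [this]
  exact isOpen_iUnion fun p => isOpen_lt (by fun_prop) continuous_const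

lemma recipSet_subset_cycSet (j : ℕ) : recipSet ⊆ cycSet j := by
  rintro f ⟨P, _, hP⟩
  exact ⟨P, by rw [hP, sub_self, norm_zero]; positivity⟩

lemma recipSet_subset_closure (E : Set ℂ) (hE : E ⊆ sphere (0 : ℂ) 1) (hEclosed : IsClosed E)
    (hEnull : circleNull E) (g : C(E, ℂ)) (j : ℕ) :
    recipSet ⊆ closure (recipSet ∩ univSet E g j) := by
  rintro f₀ ⟨P₀, hP₀, hf₀⟩
  rw [Metric.mem_closure_iff]
  intro ε hε
  -- a total function restricting to `g` on `E`
  classical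
  let g' : ℂ → ℂ := fun z => if h : z ∈ E then g ⟨z, h⟩ else 0
  have hg' : ContinuousOn g' E := by
    rw [continuousOn_iff_continuous_domRestrict]
    convert g.continuous using 1
    ext z
    simp [g']
  set τ : ℝ := min ε (1 / (2 * ((j : ℝ) + 1))) with hτ
  have hτ0 : 0 < τ := by positivity
  obtain ⟨P, hP, hPg, f, hf, hff⟩ :=
    exists_recip_near E hE hEclosed hEnull P₀ hP₀ f₀ hf₀ g' hg' τ hτ0
  refine ⟨f, ⟨⟨P, hP, hf⟩, ?_⟩, ?_⟩
  · rw [univSet, mem_interior_iff_mem_nhds]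
    have hdeg : P.degree ≤ ((max j P.natDegree : ℕ) : WithBot ℕ) :=
      degree_le_natDegree.trans (by exact_mod_cast le_max_right _ _)
    filter_upwards [opa_near (max j P.natDegree) P hdeg f hf (1 / (2 * ((j : ℝ) + 1)))
      (by positivity)] with f' hf'
    refine ⟨max j P.natDegree, le_max_left _ _, fun z => ?_⟩
    have hz1 : ‖(z : ℂ)‖ = 1 := by simpa using hE z.2
    have h1 := hf' z hz1.le
    have h2 := (hPg z z.2).trans_le (min_le_right _ _)
    simp only [g', z.2, dif_pos] at h2
    have h3 := norm_sub_le_norm_sub_add_norm_sub ((opa (max j P.natDegree) f').eval (z : ℂ))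
      (P.eval (z : ℂ)) (g z)
    have h4 : 1 / (2 * ((j : ℝ) + 1)) + 1 / (2 * ((j : ℝ) + 1)) = 1 / ((j : ℝ) + 1) := by
      field_simp
      norm_num
    linarith
  · rw [dist_comm, dist_eq_norm]
    exact hff.trans_le (min_le_left _ _)

/-- If `E ⊆ 𝕋` is closed of measure zero, then there is a cyclic
function `f ∈ H²` (the polynomial multiples of `f` are dense in `H²`) with universal
optimal polynomial approximants on `E`. -/
theorem exists_cyclic_universalOpa (E : Set ℂ) (hE : E ⊆ sphere (0 : ℂ) 1)
    (hEclosed : IsClosed E) (hEnull : circleNull E) :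
    ∃ f : H2, f ≠ 0 ∧ HasUniversalOpa E f ∧
      ∀ h : H2, ∀ ε > 0, ∃ p : Polynomial ℂ,
        Real.sqrt (∑' k, ‖coeffMul p (fun j => f j) k - h k‖ ^ 2) < ε := by
  have hEc : IsCompact E := (isCompact_sphere (0 : ℂ) 1).of_isClosed_subset hEclosed hE
  have : CompactSpace E := isCompact_iff_compactSpace.1 hEc
  -- the complete metric space in which the category argument takes place
  let X : Set H2 := closure recipSet
  have hXc : CompleteSpace X := isClosed_closure.completeSpace_coe
  have hX : Nonempty X := ⟨⟨e0, subset_closure ⟨1, by simp, by simp [mulOp_one]⟩⟩⟩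
  let O : ℕ × ℕ → Set H2 := fun i =>
    univSet E (TopologicalSpace.denseSeq C(E, ℂ) i.1) i.2 ∩ cycSet i.2
  have hO : ∀ i, IsOpen (O i) := fun i => isOpen_interior.inter (cycSet_isOpen _)
  have hdense : ∀ i, Dense ((↑) ⁻¹' O i : Set X) := by
    intro i
    rw [Subtype.dense_iff]
    have h1 : recipSet ⊆ closure (recipSet ∩ O i) := by
      have h2 := recipSet_subset_closure E hE hEclosed hEnull
        (TopologicalSpace.denseSeq C(E, ℂ) i.1) i.2
      refine h2.trans (closure_mono ?_)
      rintro f ⟨hf1, hf2⟩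
      exact ⟨hf1, hf2, recipSet_subset_cycSet _ hf1⟩
    refine (closure_minimal h1 isClosed_closure).trans (closure_mono ?_)
    rintro f ⟨hf1, hf2⟩
    exact ⟨⟨f, subset_closure hf1⟩, hf2, rfl⟩
  obtain ⟨⟨f, hfX⟩, hfO⟩ :=
    (dense_iInter_of_isOpen (fun i => (hO i).preimage continuous_subtype_val) hdense).nonempty
  have hf : ∀ i, f ∈ O i := fun i => Set.mem_iInter.1 hfO i
  have hcyc : ∀ ε > 0, ∃ p : ℂ[X], ‖mulOp p f - e0‖ < ε := by
    intro ε hε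
    obtain ⟨j, hj⟩ := exists_nat_one_div_lt hε
    obtain ⟨p, hp⟩ := (hf (0, j)).2
    exact ⟨p, hp.trans hj⟩
  refine ⟨f, ?_, ?_, ?_⟩
  · rintro rfl
    obtain ⟨p, hp⟩ := hcyc 1 one_pos
    rw [map_zero, zero_sub, norm_neg, e0_norm] at hp
    exact lt_irrefl _ hp
  · intro g hg
    have hfreq : ∀ s : ℕ, ∃ᶠ n in atTop,
        ∀ z ∈ E, ‖(opa n f).eval z - g z‖ < 1 / ((s : ℝ) + 1) := by
      intro s
      rw [frequently_atTop]
      intro N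
      let gE : C(E, ℂ) := ⟨E.domRestrict g, hg.domRestrict⟩
      have hs : (0 : ℝ) < 1 / ((s : ℝ) + 1) / 2 := by positivity
      obtain ⟨i, hi⟩ := (TopologicalSpace.denseRange_denseSeq C(E, ℂ)).exists_dist_lt gE hs
      obtain ⟨j, hj⟩ := exists_nat_one_div_lt hs
      obtain ⟨n, hn, hng⟩ := interior_subset (hf (i, max N j)).1
      refine ⟨n, (le_max_left _ _).trans hn, fun z hz => ?_⟩
      have h1 := hng ⟨z, hz⟩
      have h2 := (ContinuousMap.dist_apply_le_dist (⟨z, hz⟩ : E)).trans_lt hi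
      rw [dist_comm, dist_eq_norm] at h2
      have h3 : (1 : ℝ) / (((max N j : ℕ) : ℝ) + 1) ≤ 1 / ((j : ℝ) + 1) := by
        gcongr
        exact le_max_right _ _
      have h4 := norm_sub_le_norm_sub_add_norm_sub ((opa n f).eval z)
        (TopologicalSpace.denseSeq C(E, ℂ) i ⟨z, hz⟩) (g z)
      have h5 : ‖TopologicalSpace.denseSeq C(E, ℂ) i ⟨z, hz⟩ - g z‖ < 1 / ((s : ℝ) + 1) / 2 := h2
      linarith
    obtain ⟨m, hm, hmg⟩ := extraction_forall_of_frequently hfreq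
    refine ⟨m, hm, ?_⟩
    rw [Metric.tendstoUniformlyOn_iff]
    intro ε hε
    obtain ⟨N, hN⟩ := exists_nat_one_div_lt hε
    filter_upwards [eventually_ge_atTop N] with s hs z hz
    rw [dist_comm, dist_eq_norm]
    refine (hmg s z hz).trans (lt_of_le_of_lt ?_ hN)
    gcongr
  · intro h ε hε
    obtain ⟨p, hp⟩ := exists_poly_approx h (ε / 2) (half_pos hε)
    obtain ⟨q, hq⟩ := hcyc (ε / (2 * (‖mulOp p‖ + 1))) (by positivity)
    refine ⟨p * q, ?_⟩
    rw [sqrt_tsum_eq]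
    have h1 : mulOp (p * q) f - h = mulOp p (mulOp q f - e0) + (mulOp p e0 - h) := by
      rw [mulOp_mul_apply, map_sub]; abel
    have h2 : ‖mulOp p (mulOp q f - e0)‖ ≤ ε / 2 := by
      refine (ContinuousLinearMap.le_opNorm _ _).trans ?_
      calc _ ≤ (‖mulOp p‖ + 1) * (ε / (2 * (‖mulOp p‖ + 1))) := by
            gcongr
            linarith
        _ = _ := by field_simp
    rw [h1]
    refine (norm_add_le _ _).trans_lt ?_
    linarith

end
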